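/- The Evidence Protection Program yields protected data flow graphs: for every Copland phrase t and place p, the data flow graph C(epp(t,p,ξ),p,⟨⟩,ξ) is protected. -/

import Mathlib

namespace Copland

/-- Places are drawn from a countable set. -/
abbrev Place := ℕ
/-- Symbols (measurement/target identifiers) are drawn from a countable set. -/
abbrev Symb := ℕ

/-- Splitting specifications: `+` or `-`. -/
inductive Split where
  | plus
  | minus
deriving DecidableEq, Repr

/-- Copland phrases. -/
inductive Phrase where
  | meas : Symb → Place → Symb → Phrase          -- measurement  m q s
  | att  : Place → Phrase → Phrase               -- @_q [ t ]
  | copy : Phrase                                 -- _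
  | sign : Phrase                                 -- !
  | hash : Phrase                                 -- #
  | lseq : Phrase → Phrase → Phrase               -- t1 → t2
  | bseq : Split → Split → Phrase → Phrase → Phrase  -- t1 d1<d2 t2
  | bpar : Split → Split → Phrase → Phrase → Phrase  -- t1 d1~d2 t2
deriving DecidableEq, Repr

/-- Evidence terms. -/
inductive Evidence where
  | empty : Evidence                                          -- ξ
  | meas : Symb → Place → Symb → Place → List ℕ → Evidence → Evidence  -- m(ms(m,q,s),p,φ,e)
  | sig  : Evidence → Place → Evidence                        -- [[e]]_p
  | hash : Evidence → Place → Evidence                        -- #{e}_p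
  | seqc : Evidence → Evidence → Evidence                     -- e1 ;; e2
  | parc : Evidence → Evidence → Evidence                     -- e1 || e2
deriving DecidableEq, Repr

/-- The effect `d(e)` of a splitting specification on evidence. -/
def splitEv : Split → Evidence → Evidence
  | .plus, e => e
  | .minus, _ => .empty

/-- The Copland evidence semantics `E(t,p,φ,e)`. -/
def eval : Phrase → Place → List ℕ → Evidence → Evidence
  | .meas m q s, p, φ, e => .meas m q s p φ e
  | .copy, _, _, e => e
  | .sign, p, _, e => .sig e p
  | .hash, p, _, e => .hash e p
  | .att q t, _, φ, e => eval t q (1 :: φ) e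
  | .lseq t1 t2, p, φ, e => eval t2 p (2 :: φ) (eval t1 p (1 :: φ) e)
  | .bseq d1 d2 t1 t2, p, φ, e =>
      .seqc (eval t1 p (1 :: φ) (splitEv d1 e)) (eval t2 p (2 :: φ) (splitEv d2 e))
  | .bpar d1 d2 t1 t2, p, φ, e =>
      .parc (eval t1 p (1 :: φ) (splitEv d1 e)) (eval t2 p (2 :: φ) (splitEv d2 e))

/-- Join operators: sequential `<` or parallel `~`. -/
inductive JoinOp where
  | seqJ
  | parJ
deriving DecidableEq, Repr

/-- Event labels. -/
inductive Label where
  | msp   : Place → Evidence → Label                    -- p : msp(e)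
  | cpy   : Place → Evidence → Label                    -- p : cpy(e)
  | sig   : Place → Evidence → Label                    -- p : sig(e)
  | hsh   : Place → Evidence → Label                    -- p : hsh(e)
  | req   : Place → Place → Evidence → Label            -- p : req(q,e)
  | rpy   : Place → Place → Evidence → Label            -- p : rpy(q,e)
  | split : Place → Split → Split → Evidence → Label    -- p : split(d1,d2,e)
  | join  : Place → JoinOp → Evidence → Label           -- p : join(o,e)
deriving DecidableEq, Repr

/-- The (sending) place `ϱ(v)`: the place before the colon in the label. -/
def Label.place : Label → Place
  | .msp p _ => p
  | .cpy p _ => p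
  | .sig p _ => p
  | .hsh p _ => p
  | .req p _ _ => p
  | .rpy p _ _ => p
  | .split p _ _ _ => p
  | .join p _ _ => p

/-- The receiving place `ϱ'(v)`. -/
def Label.recvPlace : Label → Place
  | .req _ q _ => q
  | .rpy _ q _ => q
  | l => l.place

/-- The evidence `ε(v)`: the last argument of the label. -/
def Label.evid : Label → Evidence
  | .msp _ e => e
  | .cpy _ e => e
  | .sig _ e => e
  | .hsh _ e => e
  | .req _ _ e => e
  | .rpy _ _ e => e
  | .split _ _ _ e => e
  | .join _ _ e => e

/-- A measurement event is one whose label has the form `p : msp(e)`. -/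
def Label.IsMeas (l : Label) : Prop := ∃ p e, l = .msp p e

/-- A cross-place communication event is one with `ϱ(v) ≠ ϱ'(v)`. -/
def Label.IsCross (l : Label) : Prop := l.place ≠ l.recvPlace

/-- A data flow graph: events are the naturals `0, …, n-1`, with an input event,
an output event, flow edges, and a labeling. -/
structure DFG where
  n : ℕ
  vin : ℕ
  vout : ℕ
  edges : List (ℕ × ℕ)
  label : ℕ → Label

namespace DFG

/-- Well-formedness of a data flow graph: events are in range, the flow
relation is acyclic, and there is no edge into the input event nor out of
the output event. -/
def WF (G : DFG) : Prop :=
  G.vin < G.n ∧ G.vout < G.n ∧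
  (∀ pr ∈ G.edges, pr.1 < G.n ∧ pr.2 < G.n) ∧
  (∀ v, ¬ Relation.TransGen (fun a b => (a, b) ∈ G.edges) v v) ∧
  (∀ pr ∈ G.edges, pr.2 ≠ G.vin ∧ pr.1 ≠ G.vout)

/-- The single-event data flow graph. -/
def single (l : Label) : DFG :=
  { n := 1, vin := 0, vout := 0, edges := [], label := fun _ => l }

/-- Before-copy composition: the second graph's events are renumbered after the
first's, and a flow edge links the output of the first to the input of the second. -/
def seqComp (G1 G2 : DFG) : DFG :=
  { n := G1.n + G2.n
    vin := G1.vin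
    vout := G1.n + G2.vout
    edges := G1.edges ++ G2.edges.map (fun pr => (G1.n + pr.1, G1.n + pr.2)) ++
      [(G1.vout, G1.n + G2.vin)]
    label := fun i => if i < G1.n then G1.label i else G2.label (i - G1.n) }

/-- Branching composition: a split event, the two subgraphs (with a flow edge from
the split into the input of a subgraph exactly when the corresponding splitting
specification is `+`), and a join event receiving flow from both outputs. -/
def branch (sp jn : Label) (d1 d2 : Split) (G1 G2 : DFG) : DFG :=
  { n := G1.n + G2.n + 2
    vin := 0
    vout := G1.n + G2.n + 1
    edges :=
      G1.edges.map (fun pr => (pr.1 + 1, pr.2 + 1)) ++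
      G2.edges.map (fun pr => (pr.1 + 1 + G1.n, pr.2 + 1 + G1.n)) ++
      (if d1 = Split.plus then [(0, G1.vin + 1)] else []) ++
      (if d2 = Split.plus then [(0, G2.vin + 1 + G1.n)] else []) ++
      [(G1.vout + 1, G1.n + G2.n + 1), (G2.vout + 1 + G1.n, G1.n + G2.n + 1)]
    label := fun i =>
      if i = 0 then sp
      else if i < G1.n + 1 then G1.label (i - 1)
      else if i < G1.n + G2.n + 1 then G2.label (i - 1 - G1.n)
      else jn }

end DFG

/-- The Copland data flow semantics `C(t,p,φ,e)`. -/
def sem : Phrase → Place → List ℕ → Evidence → DFG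
  | .meas m q s, p, φ, e => .single (.msp p (.meas m q s p φ e))
  | .copy, p, _, e => .single (.cpy p e)
  | .sign, p, _, e => .single (.sig p (.sig e p))
  | .hash, p, _, e => .single (.hsh p (.hash e p))
  | .att q t, p, φ, e =>
      (DFG.single (.req p q e)).seqComp
        ((sem t q (1 :: φ) e).seqComp (.single (.rpy q p (eval t q (1 :: φ) e))))
  | .lseq t1 t2, p, φ, e =>
      (sem t1 p (1 :: φ) e).seqComp (sem t2 p (2 :: φ) (eval t1 p (1 :: φ) e))
  | .bseq d1 d2 t1 t2, p, φ, e =>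
      DFG.branch (.split p d1 d2 e)
        (.join p .seqJ (eval (.bseq d1 d2 t1 t2) p φ e)) d1 d2
        (sem t1 p (1 :: φ) (splitEv d1 e)) (sem t2 p (2 :: φ) (splitEv d2 e))
  | .bpar d1 d2 t1 t2, p, φ, e =>
      DFG.branch (.split p d1 d2 e)
        (.join p .parJ (eval (.bpar d1 d2 t1 t2) p φ e)) d1 d2
        (sem t1 p (1 :: φ) (splitEv d1 e)) (sem t2 p (2 :: φ) (splitEv d2 e))

namespace DFG

/-- A path of a data flow graph: a nonempty sequence of events of the graph
successively related by flow edges. -/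
def IsPath (G : DFG) (π : List ℕ) : Prop :=
  π ≠ [] ∧ (∀ v ∈ π, v < G.n) ∧ π.Chain' (fun a b => (a, b) ∈ G.edges)

/-- One step of the tamper set computation. -/
def tsStep (G : DFG) (s : Set Place) (v : ℕ) : Set Place :=
  match G.label v with
  | .sig p _ => {p} ∩ s
  | _ => s

/-- The tamper set `ts(π)` of a path: `ts(⟨v⟩)` is the set of all places if `v` is a
measurement event and `∅` otherwise; `ts(π § v) = {p} ∩ ts(π)` if `ℓ(v) = p:sig(e)`,
and `ts(π § v) = ts(π)` otherwise. -/
def ts (G : DFG) (π : List ℕ) : Set Place :=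
  match π with
  | [] => ∅
  | v :: rest =>
      rest.foldl (tsStep G)
        (match G.label v with
          | .msp _ _ => Set.univ
          | _ => ∅)

/-- A path is `p`-signing iff every signature event on it occurs at `p`. -/
def Signing (G : DFG) (π : List ℕ) (p : Place) : Prop :=
  ∀ v ∈ π, ∀ q e, G.label v = .sig q e → q = p

/-- A path `π = ⟨v, …, v'⟩` permits tampering (at `v'` with the evidence from `v`)
iff (1) `v` is a measurement event, (2) the length of `π` exceeds 1, and
(3) `π` is `ϱ(v')`-signing or `ϱ'(v')`-signing. -/
def PermitsTamper (G : DFG) (π : List ℕ) : Prop :=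
  (∀ v, π.head? = some v → (G.label v).IsMeas) ∧
  1 < π.length ∧
  (∀ v', π.getLast? = some v' →
    G.Signing π (G.label v').place ∨ G.Signing π (G.label v').recvPlace)

/-- A path `⟨v1,…,vn⟩` is local to place `p` iff every interior event has both
sending and receiving place `p`, and each endpoint has sending or receiving place `p`. -/
def LocalTo (G : DFG) (π : List ℕ) (p : Place) : Prop :=
  (∀ i v, 0 < i → i + 1 < π.length → π[i]? = some v →
      (G.label v).place = p ∧ (G.label v).recvPlace = p) ∧
  (∀ v, π.head? = some v → (G.label v).place = p ∨ (G.label v).recvPlace = p) ∧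
  (∀ v, π.getLast? = some v → (G.label v).place = p ∨ (G.label v).recvPlace = p)

/-- `π` is a path of `G` from `v` to `v'`. -/
def PathBetween (G : DFG) (v v' : ℕ) (π : List ℕ) : Prop :=
  G.IsPath π ∧ π.head? = some v ∧ π.getLast? = some v'

/-- A set `S` of events of `G` is a tamper strategy for `v` iff every path from `v`
to the output event of `G` contains an event `v' ∈ S` such that the prefix
`⟨v, …, v'⟩` of the path permits tampering. -/
def TamperStrategy (G : DFG) (S : Set ℕ) (v : ℕ) : Prop :=
  (∀ w ∈ S, w < G.n) ∧
  ∀ π, G.PathBetween v G.vout π →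
    ∃ v' ∈ S, ∃ π', π' <+: π ∧ π'.getLast? = some v' ∧ G.PermitsTamper π'

/-- `S` is a minimal tamper strategy for `v` iff it is a tamper strategy for `v` and
every tamper strategy for `v` included in `S` equals `S`. -/
def MinimalTamperStrategy (G : DFG) (S : Set ℕ) (v : ℕ) : Prop :=
  G.TamperStrategy S v ∧ ∀ S', G.TamperStrategy S' v → S' ⊆ S → S' = S

/-- A path `π = ⟨v1,…,vn⟩` is protected iff either `v1` is not a measurement event,
or for every `1 < i ≤ n`, if `vi` is a cross-place communication event then
`ts(⟨v1,…,vi⟩) ⊆ {ϱ(vi)}`. -/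
def ProtectedPath (G : DFG) (π : List ℕ) : Prop :=
  (∀ v, π.head? = some v → ¬ (G.label v).IsMeas) ∨
  (∀ i v, 0 < i → i < π.length → π[i]? = some v → (G.label v).IsCross →
      G.ts (π.take (i + 1)) ⊆ {(G.label v).place})

/-- A data flow graph is protected iff all of its paths are protected. -/
def Protected (G : DFG) : Prop :=
  ∀ π, G.IsPath π → G.ProtectedPath π

end DFG

/-- The tamper places function `τ` on evidence. -/
def tau : Evidence → Set Place
  | .empty => ∅
  | .meas _ _ _ _ _ _ => Set.univ
  | .hash e _ => tau e
  | .sig e p => {p} ∩ tau e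
  | .seqc e1 e2 => tau e1 ∪ tau e2
  | .parc e1 e2 => tau e1 ∪ tau e2

open scoped Classical in
/-- The Evidence Protection Program `epp(t,p,e)`. -/
noncomputable def epp : Phrase → Place → Evidence → Phrase
  | .meas m q s, _, _ => .meas m q s
  | .copy, _, _ => .copy
  | .sign, _, _ => .sign
  | .hash, _, _ => .hash
  | .lseq t1 t2, p, e =>
      .lseq (epp t1 p e) (epp t2 p (eval (epp t1 p e) p [] e))
  | .att q t, p, e =>
      if q = p then .att q (epp t p e)
      else if tau e ⊆ {p} then
        if tau (eval (epp t q e) q [] e) ⊆ {q} then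
          .att q (epp t q e)
        else
          .att q (.lseq (epp t q e) .sign)
      else
        if tau (eval (epp t q (.sig e p)) q [] (.sig e p)) ⊆ {q} then
          .lseq .sign (.att q (epp t q (.sig e p)))
        else
          .lseq .sign (.att q (.lseq (epp t q (.sig e p)) .sign))
  | .bseq d1 d2 t1 t2, p, e =>
      .bseq d1 d2 (epp t1 p (splitEv d1 e)) (epp t2 p (splitEv d2 e))
  | .bpar d1 d2 t1 t2, p, e =>
      .bpar d1 d2 (epp t1 p (splitEv d1 e)) (epp t2 p (splitEv d2 e))

end Copland

/-!
The evidence carried by an event over-approximates what can be tampered with along every path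
that ends there: the set `ts π` is contained in `τ(ε(v))` whenever `π` ends at `v`. Indeed, a
measurement event carries evidence with every place in its tamper places, and along a flow edge
`τ ∘ ε` loses a place only at a signature event, where `ts` loses it as well. It therefore
suffices that each cross-place communication event of `C(epp(t,p,ξ),p,⟨⟩,ξ)` carries evidence `e`
with `τ(e) ⊆ {ϱ(v)}`. The program inserts its signatures exactly to force this. Its tests evaluate
phrases at the position `⟨⟩` instead of the actual one, which is harmless because `τ` ignores
positions, and its guarantee persists when the evidence it was run on has extra tamper places
because `τ(E(t,p,φ,e))` is monotone in `τ(e)`.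
-/

namespace Copland

section Tau

theorem tau_sig_subset (e : Evidence) (p : Place) : tau (.sig e p) ⊆ {p} :=
  Set.inter_subset_left

theorem tau_sig_mono {e e' : Evidence} (h : tau e ⊆ tau e') (p : Place) :
    tau (.sig e p) ⊆ tau (.sig e' p) :=
  Set.inter_subset_inter_right _ h

theorem tau_splitEv_mono (d : Split) {e e' : Evidence} (h : tau e ⊆ tau e') :
    tau (splitEv d e) ⊆ tau (splitEv d e') := by
  cases d with
  | plus => exact h
  | minus => exact subset_rfl

theorem tau_eval_mono (t : Phrase) (p : Place) (φ φ' : List ℕ) {e e' : Evidence}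
    (h : tau e ⊆ tau e') : tau (eval t p φ e) ⊆ tau (eval t p φ' e') := by
  induction t generalizing p φ φ' e e' with
  | meas => exact subset_rfl
  | copy | hash => exact h
  | sign => exact tau_sig_mono h p
  | att _ _ ih => exact ih _ _ _ h
  | lseq _ _ ih₁ ih₂ => exact ih₂ _ _ _ (ih₁ _ _ _ h)
  | bseq d₁ d₂ _ _ ih₁ ih₂ | bpar d₁ d₂ _ _ ih₁ ih₂ =>
    exact Set.union_subset_union (ih₁ _ _ _ (tau_splitEv_mono d₁ h))
      (ih₂ _ _ _ (tau_splitEv_mono d₂ h))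

end Tau

namespace Label

/-- The effect of appending an event with label `l` to a path whose tamper set is `s`: the label
form of `DFG.tsStep`, with the label as last argument. -/
def tamperStep (s : Set Place) : Label → Set Place
  | .sig p _ => {p} ∩ s
  | _ => s

theorem tamperStep_mono {s t : Set Place} (h : s ⊆ t) (l : Label) :
    l.tamperStep s ⊆ l.tamperStep t := by
  cases l with
  | sig p e => exact Set.inter_subset_inter_right _ h
  | _ => exact h

/-- The evidence of an event labeled `l` accounts for all tampering that is still possible once
the event has received the evidence `e`. -/
def AccountsFor (l : Label) (e : Evidence) : Prop :=
  l.tamperStep (tau e) ⊆ tau l.evid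

/-- If `l` labels a cross-place communication event, then its evidence can be tampered with only
at the sending place. -/
def IsConfined (l : Label) : Prop :=
  l.IsCross → tau l.evid ⊆ {l.place}

theorem isConfined_of_place_eq {l : Label} (h : l.place = l.recvPlace) : l.IsConfined :=
  fun hcross => absurd h hcross

end Label

namespace DFG

section Composition

variable {G₁ G₂ : DFG} {v : ℕ}

theorem label_seqComp_of_lt (hv : v < G₁.n) : (G₁.seqComp G₂).label v = G₁.label v :=
  if_pos hv

theorem label_seqComp_add (G₁ G₂ : DFG) (v : ℕ) :
    (G₁.seqComp G₂).label (G₁.n + v) = G₂.label v := by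
  simp [seqComp]

theorem mem_edges_seqComp {a b : ℕ} :
    (a, b) ∈ (G₁.seqComp G₂).edges ↔ (a, b) ∈ G₁.edges ∨
      (∃ c d, (c, d) ∈ G₂.edges ∧ G₁.n + c = a ∧ G₁.n + d = b) ∨
      a = G₁.vout ∧ b = G₁.n + G₂.vin := by
  simp [seqComp]

variable {sp jn : Label} {d₁ d₂ : Split}

theorem label_branch_left (hv : v < G₁.n) :
    (branch sp jn d₁ d₂ G₁ G₂).label (v + 1) = G₁.label v := by
  simp [branch, hv]

theorem label_branch_right (hv : v < G₂.n) :
    (branch sp jn d₁ d₂ G₁ G₂).label (v + 1 + G₁.n) = G₂.label v := by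
  have hsub : v + 1 + G₁.n - 1 - G₁.n = v := by omega
  simp only [branch]
  rw [if_neg (by omega), if_neg (by omega), if_pos (by omega), hsub]

theorem label_branch_join : (branch sp jn d₁ d₂ G₁ G₂).label (G₁.n + G₂.n + 1) = jn := by
  simp [branch]

theorem mem_edges_branch {a b : ℕ} :
    (a, b) ∈ (branch sp jn d₁ d₂ G₁ G₂).edges ↔
      (∃ c d, (c, d) ∈ G₁.edges ∧ c + 1 = a ∧ d + 1 = b) ∨
      (∃ c d, (c, d) ∈ G₂.edges ∧ c + 1 + G₁.n = a ∧ d + 1 + G₁.n = b) ∨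
      (d₁ = .plus ∧ a = 0 ∧ b = G₁.vin + 1) ∨
      (d₂ = .plus ∧ a = 0 ∧ b = G₂.vin + 1 + G₁.n) ∨
      (a = G₁.vout + 1 ∧ b = G₁.n + G₂.n + 1) ∨
      (a = G₂.vout + 1 + G₁.n ∧ b = G₁.n + G₂.n + 1) := by
  simp [branch, List.mem_ite_nil_right]

end Composition

/-- The input event, the output event and the endpoints of all flow edges are events of `G`:
the part of `DFG.WF` needed to read off the labels of a composed graph. -/
structure InRange (G : DFG) : Prop where
  vin_lt : G.vin < G.n
  vout_lt : G.vout < G.n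
  edge_lt : ∀ {a b}, (a, b) ∈ G.edges → a < G.n ∧ b < G.n

namespace InRange

variable {G₁ G₂ : DFG}

theorem single (l : Label) : (DFG.single l).InRange where
  vin_lt := Nat.one_pos
  vout_lt := Nat.one_pos
  edge_lt := by simp [DFG.single]

theorem seqComp (h₁ : G₁.InRange) (h₂ : G₂.InRange) : (G₁.seqComp G₂).InRange where
  vin_lt := Nat.lt_add_right _ h₁.vin_lt
  vout_lt := Nat.add_lt_add_left h₂.vout_lt _
  edge_lt hab := by
    change _ < G₁.n + G₂.n ∧ _ < G₁.n + G₂.n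
    have := h₁.vout_lt
    have := h₂.vin_lt
    rcases mem_edges_seqComp.mp hab with hab | ⟨c, d, hcd, rfl, rfl⟩ | ⟨rfl, rfl⟩
    · have := h₁.edge_lt hab
      omega
    · have := h₂.edge_lt hcd
      omega
    · omega

theorem branch (h₁ : G₁.InRange) (h₂ : G₂.InRange) (sp jn : Label) (d₁ d₂ : Split) :
    (DFG.branch sp jn d₁ d₂ G₁ G₂).InRange where
  vin_lt := Nat.succ_pos _
  vout_lt := Nat.lt_succ_self _
  edge_lt hab := by
    change _ < G₁.n + G₂.n + 2 ∧ _ < G₁.n + G₂.n + 2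
    have := h₁.vin_lt
    have := h₂.vin_lt
    have := h₁.vout_lt
    have := h₂.vout_lt
    rcases mem_edges_branch.mp hab with ⟨c, d, hcd, rfl, rfl⟩ | ⟨c, d, hcd, rfl, rfl⟩ | hab
    · have := h₁.edge_lt hcd
      omega
    · have := h₂.edge_lt hcd
      omega
    · omega

theorem label_vin_seqComp (h₁ : G₁.InRange) (G₂ : DFG) :
    (G₁.seqComp G₂).label (G₁.seqComp G₂).vin = G₁.label G₁.vin :=
  label_seqComp_of_lt h₁.vin_lt

end InRange

/-- All events of `G` have a label satisfying `P`. -/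
def AllEvents (G : DFG) (P : Label → Prop) : Prop :=
  ∀ v < G.n, P (G.label v)

namespace AllEvents

variable {P : Label → Prop} {G₁ G₂ : DFG}

theorem single {l : Label} (h : P l) : (DFG.single l).AllEvents P :=
  fun _ _ => h

theorem seqComp (h₁ : G₁.AllEvents P) (h₂ : G₂.AllEvents P) : (G₁.seqComp G₂).AllEvents P := by
  intro v hv
  simp only [DFG.seqComp] at hv ⊢
  split_ifs with h
  · exact h₁ v h
  · exact h₂ _ (by omega)

theorem branch {sp jn : Label} (d₁ d₂ : Split) (hsp : P sp) (hjn : P jn)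
    (h₁ : G₁.AllEvents P) (h₂ : G₂.AllEvents P) :
    (DFG.branch sp jn d₁ d₂ G₁ G₂).AllEvents P := by
  intro v _
  simp only [DFG.branch]
  split_ifs
  · exact hsp
  · exact h₁ _ (by omega)
  · exact h₂ _ (by omega)
  · exact hjn

end AllEvents

/-- The labels of the two endpoints of each flow edge of `G` are related by `R`. -/
def AllFlows (G : DFG) (R : Label → Label → Prop) : Prop :=
  ∀ a b, (a, b) ∈ G.edges → R (G.label a) (G.label b)

namespace AllFlows

variable {R : Label → Label → Prop} {G₁ G₂ : DFG}

theorem single (l : Label) : (DFG.single l).AllFlows R := by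
  simp [AllFlows, DFG.single]

theorem seqComp (hr₁ : G₁.InRange) (h₁ : G₁.AllFlows R) (h₂ : G₂.AllFlows R)
    (hlink : R (G₁.label G₁.vout) (G₂.label G₂.vin)) : (G₁.seqComp G₂).AllFlows R := by
  intro a b hab
  rcases mem_edges_seqComp.mp hab with hab | ⟨c, d, hcd, rfl, rfl⟩ | ⟨rfl, rfl⟩
  · obtain ⟨ha, hb⟩ := hr₁.edge_lt hab
    simpa only [label_seqComp_of_lt ha, label_seqComp_of_lt hb] using h₁ a b hab
  · simpa only [label_seqComp_add] using h₂ c d hcd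
  · simpa only [label_seqComp_of_lt hr₁.vout_lt, label_seqComp_add] using hlink

theorem branch {sp jn : Label} {d₁ d₂ : Split} (hr₁ : G₁.InRange) (hr₂ : G₂.InRange)
    (h₁ : G₁.AllFlows R) (h₂ : G₂.AllFlows R)
    (hsp₁ : d₁ = .plus → R sp (G₁.label G₁.vin)) (hsp₂ : d₂ = .plus → R sp (G₂.label G₂.vin))
    (hjn₁ : R (G₁.label G₁.vout) jn) (hjn₂ : R (G₂.label G₂.vout) jn) :
    (DFG.branch sp jn d₁ d₂ G₁ G₂).AllFlows R := by
  intro a b hab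
  rcases mem_edges_branch.mp hab with ⟨c, d, hcd, rfl, rfl⟩ | ⟨c, d, hcd, rfl, rfl⟩ |
    ⟨hd, rfl, rfl⟩ | ⟨hd, rfl, rfl⟩ | ⟨rfl, rfl⟩ | ⟨rfl, rfl⟩
  · obtain ⟨hc, hd⟩ := hr₁.edge_lt hcd
    simpa only [label_branch_left hc, label_branch_left hd] using h₁ c d hcd
  · obtain ⟨hc, hd⟩ := hr₂.edge_lt hcd
    simpa only [label_branch_right hc, label_branch_right hd] using h₂ c d hcd
  · rw [label_branch_left hr₁.vin_lt]
    exact hsp₁ hd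
  · rw [label_branch_right hr₂.vin_lt]
    exact hsp₂ hd
  · simpa only [label_branch_left hr₁.vout_lt, label_branch_join] using hjn₁
  · simpa only [label_branch_right hr₂.vout_lt, label_branch_join] using hjn₂

end AllFlows

section TamperSet

variable {G : DFG}

theorem IsPath.of_prefix {π π' : List ℕ} (h : G.IsPath π) (hne : π' ≠ []) (hpre : π' <+: π) :
    G.IsPath π' :=
  ⟨hne, fun v hv => h.2.1 v (hpre.mem hv), h.2.2.prefix hpre⟩

theorem ts_append_singleton (G : DFG) {π : List ℕ} (hπ : π ≠ []) (v : ℕ) :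
    G.ts (π ++ [v]) = (G.label v).tamperStep (G.ts π) := by
  obtain ⟨u, π, rfl⟩ := List.exists_cons_of_ne_nil hπ
  exact List.foldl_append

theorem ts_singleton_subset {v : ℕ} {s : Set Place} (h : (G.label v).IsMeas → s = Set.univ) :
    G.ts [v] ⊆ s := by
  simp only [ts, List.foldl_nil]
  split
  next p e hl => rw [h ⟨p, e, hl⟩]
  next => exact Set.empty_subset s

theorem ts_subset_tau_evid (hmeas : G.AllEvents fun l => l.IsMeas → tau l.evid = Set.univ)
    (hflow : G.AllFlows fun l l' => l'.AccountsFor l.evid) {π : List ℕ} {v : ℕ}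
    (hπ : G.IsPath (π ++ [v])) : G.ts (π ++ [v]) ⊆ tau (G.label v).evid := by
  induction π using List.reverseRecOn generalizing v with
  | nil => exact ts_singleton_subset (hmeas v (hπ.2.1 v (by simp)))
  | append_singleton π u ih =>
    have hne : π ++ [u] ≠ [] := by simp
    have hedge : (u, v) ∈ G.edges := (List.isChain_append.mp hπ.2.2).2.2 u (by simp) v (by simp)
    calc G.ts (π ++ [u] ++ [v])
        = (G.label v).tamperStep (G.ts (π ++ [u])) := ts_append_singleton G hne v
      _ ⊆ (G.label v).tamperStep (tau (G.label u).evid) :=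
          Label.tamperStep_mono (ih (hπ.of_prefix hne (List.prefix_append _ _))) _
      _ ⊆ tau (G.label v).evid := hflow u v hedge

theorem protected_of_isConfined (hmeas : G.AllEvents fun l => l.IsMeas → tau l.evid = Set.univ)
    (hflow : G.AllFlows fun l l' => l'.AccountsFor l.evid) (hconf : G.AllEvents Label.IsConfined) :
    G.Protected := by
  refine fun π hπ => Or.inr fun i v _ _ hv hcross => ?_
  obtain ⟨hi, rfl⟩ := List.getElem?_eq_some_iff.mp hv
  have htake : π.take (i + 1) = π.take i ++ [π[i]] := (List.take_concat_get' π i hi).symm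
  have hpath : G.IsPath (π.take i ++ [π[i]]) :=
    hπ.of_prefix (List.concat_ne_nil _ _) (htake ▸ List.take_prefix _ _)
  rw [htake]
  exact (ts_subset_tau_evid hmeas hflow hpath).trans
    (hconf _ (hπ.2.1 _ (List.getElem_mem hi)) hcross)

end TamperSet

end DFG

section Sem

open DFG

variable (t : Phrase) (p : Place) (φ : List ℕ) (e : Evidence)

theorem inRange_sem : (sem t p φ e).InRange := by
  induction t generalizing p φ e with
  | meas | copy | sign | hash => exact .single _
  | att _ _ ih => exact .seqComp (.single _) ((ih _ _ _).seqComp (.single _))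
  | lseq _ _ ih₁ ih₂ => exact (ih₁ _ _ _).seqComp (ih₂ _ _ _)
  | bseq _ _ _ _ ih₁ ih₂ | bpar _ _ _ _ ih₁ ih₂ =>
    exact .branch (ih₁ _ _ _) (ih₂ _ _ _) _ _ _ _

theorem evid_label_vout_sem :
    ((sem t p φ e).label (sem t p φ e).vout).evid = eval t p φ e := by
  induction t generalizing p φ e with
  | meas | copy | sign | hash => rfl
  | att =>
    exact congrArg Label.evid ((label_seqComp_add _ _ _).trans (label_seqComp_add _ _ _))
  | lseq _ _ _ ih₂ => exact (congrArg Label.evid (label_seqComp_add _ _ _)).trans (ih₂ _ _ _)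
  | bseq | bpar => exact congrArg Label.evid label_branch_join

theorem accountsFor_label_vin_sem :
    ((sem t p φ e).label (sem t p φ e).vin).AccountsFor e := by
  induction t generalizing p φ e with
  | meas => exact Set.subset_univ _
  | copy | sign | hash | att | bseq | bpar => exact subset_rfl
  | lseq t₁ t₂ ih₁ _ =>
    rw [sem, (inRange_sem t₁ p (1 :: φ) e).label_vin_seqComp]
    exact ih₁ p (1 :: φ) e

theorem allEvents_sem_tau_eq_univ_of_isMeas :
    (sem t p φ e).AllEvents fun l => l.IsMeas → tau l.evid = Set.univ := by
  induction t generalizing p φ e with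
  | meas => exact .single fun _ => rfl
  | copy | sign | hash => exact .single nofun
  | att _ _ ih => exact .seqComp (.single nofun) ((ih _ _ _).seqComp (.single nofun))
  | lseq _ _ ih₁ ih₂ => exact (ih₁ _ _ _).seqComp (ih₂ _ _ _)
  | bseq _ _ _ _ ih₁ ih₂ | bpar _ _ _ _ ih₁ ih₂ =>
    exact .branch _ _ nofun nofun (ih₁ _ _ _) (ih₂ _ _ _)

theorem allFlows_sem_accountsFor :
    (sem t p φ e).AllFlows fun l l' => l'.AccountsFor l.evid := by
  induction t generalizing p φ e with
  | meas | copy | sign | hash => exact .single _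
  | att q t ih =>
    refine .seqComp (.single _) (.single _)
      (.seqComp (inRange_sem _ _ _ _) (ih _ _ _) (.single _) ?reply) ?request
    case reply => exact (congrArg tau (evid_label_vout_sem t q (1 :: φ) e)).subset
    case request =>
      rw [(inRange_sem t q (1 :: φ) e).label_vin_seqComp]
      exact accountsFor_label_vin_sem t q (1 :: φ) e
  | lseq _ _ ih₁ ih₂ =>
    refine .seqComp (inRange_sem _ _ _ _) (ih₁ _ _ _) (ih₂ _ _ _) ?_
    rw [evid_label_vout_sem]
    exact accountsFor_label_vin_sem _ _ _ _
  | bseq _ _ _ _ ih₁ ih₂ | bpar _ _ _ _ ih₁ ih₂ =>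
    refine .branch (inRange_sem _ _ _ _) (inRange_sem _ _ _ _) (ih₁ _ _ _) (ih₂ _ _ _)
      ?split₁ ?split₂ ?join₁ ?join₂
    case split₁ | split₂ =>
      rintro rfl
      exact accountsFor_label_vin_sem _ _ _ e
    case join₁ =>
      rw [evid_label_vout_sem]
      exact Set.subset_union_left
    case join₂ =>
      rw [evid_label_vout_sem]
      exact Set.subset_union_right

end Sem

section Epp

open DFG

theorem allEvents_sem_sign_isConfined (p : Place) (φ : List ℕ) (e : Evidence) :
    (sem .sign p φ e).AllEvents Label.IsConfined :=
  .single (Label.isConfined_of_place_eq rfl)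

theorem allEvents_sem_att_isConfined {t : Phrase} {p q : Place} {φ : List ℕ} {e : Evidence}
    (ht : (sem t q (1 :: φ) e).AllEvents Label.IsConfined) (hreq : p ≠ q → tau e ⊆ {p})
    (hrpy : q ≠ p → tau (eval t q (1 :: φ) e) ⊆ {q}) :
    (sem (.att q t) p φ e).AllEvents Label.IsConfined :=
  .seqComp (.single hreq) (ht.seqComp (.single hrpy))

theorem allEvents_sem_epp_isConfined (t : Phrase) (p : Place) (φ : List ℕ) {e e' : Evidence}
    (h : tau e ⊆ tau e') : (sem (epp t p e') p φ e).AllEvents Label.IsConfined := by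
  induction t generalizing p φ e e' with
  | meas | copy | sign | hash => exact .single (Label.isConfined_of_place_eq rfl)
  | lseq _ _ ih₁ ih₂ => exact (ih₁ _ _ h).seqComp (ih₂ _ _ (tau_eval_mono _ _ _ _ h))
  | bseq d₁ d₂ _ _ ih₁ ih₂ | bpar d₁ d₂ _ _ ih₁ ih₂ =>
    exact .branch _ _ (Label.isConfined_of_place_eq rfl) (Label.isConfined_of_place_eq rfl)
      (ih₁ _ _ (tau_splitEv_mono d₁ h)) (ih₂ _ _ (tau_splitEv_mono d₂ h))
  | att q t ih =>
    have hsig : tau (.sig e p) ⊆ tau (.sig e' p) := tau_sig_mono h p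
    rw [epp]
    split_ifs with hqp hreq hrpy hrpy
    · subst hqp
      exact allEvents_sem_att_isConfined (ih _ _ h) (absurd rfl) (absurd rfl)
    · exact allEvents_sem_att_isConfined (ih _ _ h) (fun _ => h.trans hreq)
        fun _ => (tau_eval_mono _ _ _ _ h).trans hrpy
    · exact allEvents_sem_att_isConfined
        ((ih _ _ h).seqComp (allEvents_sem_sign_isConfined _ _ _))
        (fun _ => h.trans hreq) fun _ => tau_sig_subset _ _
    · exact .seqComp (allEvents_sem_sign_isConfined _ _ _) <| allEvents_sem_att_isConfined
        (ih _ _ hsig) (fun _ => tau_sig_subset _ _)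
        fun _ => (tau_eval_mono _ _ _ _ hsig).trans hrpy
    · exact .seqComp (allEvents_sem_sign_isConfined _ _ _) <| allEvents_sem_att_isConfined
        ((ih _ _ hsig).seqComp (allEvents_sem_sign_isConfined _ _ _))
        (fun _ => tau_sig_subset _ _) fun _ => tau_sig_subset _ _

end Epp

end Copland

open Copland in
theorem epp_protected_general (t : Phrase) (p : Place) (φ : List ℕ) {e e' : Evidence}
    (h : tau e ⊆ tau e') : (sem (epp t p e') p φ e).Protected :=
  DFG.protected_of_isConfined (allEvents_sem_tau_eq_univ_of_isMeas _ _ _ _)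
    (allFlows_sem_accountsFor _ _ _ _) (allEvents_sem_epp_isConfined t p φ h)

open Copland in
/-- The Evidence Protection Program yields protected data flow graphs:
`C(epp(t,p,ξ),p,⟨⟩,ξ)` is protected. -/
theorem epp_protected (t : Phrase) (p : Place) :
    (sem (epp t p Evidence.empty) p [] Evidence.empty).Protected :=
  epp_protected_general t p [] subset_rfl
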